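/- Every finite simple graph with no K_5 minor (in particular, every planar graph) is generically 3-stress free. -/

import Mathlib

open scoped Classical

/-- `H` is a minor of `G`: there is a family of pairwise disjoint nonempty connected
"branch sets" in `G`, one for each vertex of `H`, such that every edge of `H` is
realized by an edge of `G` between the corresponding branch sets. -/
def HasMinor {V W : Type*} (G : SimpleGraph V) (H : SimpleGraph W) : Prop :=
  ∃ B : W → Set V,
    (∀ i, (B i).Nonempty) ∧
    (∀ i j, i ≠ j → Disjoint (B i) (B j)) ∧
    (∀ i, (G.induce (B i)).Connected) ∧
    (∀ i j, H.Adj i j → ∃ x ∈ B i, ∃ y ∈ B j, G.Adj x y)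

/-- `w : E(G) → ℝ` is a stress of the embedding `f : V → ℝ^d`. -/
noncomputable def IsStress {V : Type*} [Fintype V] (G : SimpleGraph V) (d : ℕ)
    (f : V → EuclideanSpace ℝ (Fin d)) (w : G.edgeSet → ℝ) : Prop :=
  ∀ v : V,
    (∑ u : V, if h : G.Adj v u then w ⟨s(v, u), G.mem_edgeSet.mpr h⟩ • (f v - f u) else 0) = 0

/-- The set of `d`-embeddings of `G` whose only stress is the zero function. -/
def StressFreeEmbeddings {V : Type*} [Fintype V] (G : SimpleGraph V) (d : ℕ) :
    Set (V → EuclideanSpace ℝ (Fin d)) :=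
  {f | ∀ w : G.edgeSet → ℝ, IsStress G d f w → w = 0}

/-- `G` is generically `d`-stress free: the set of `d`-embeddings with no nonzero
stress is open and dense in the space of all `d`-embeddings. -/
def GenericallyStressFree {V : Type*} [Fintype V] (G : SimpleGraph V) (d : ℕ) : Prop :=
  IsOpen (StressFreeEmbeddings G d) ∧ Dense (StressFreeEmbeddings G d)

/-!
Weights on the edges of `G` map linearly to forces at the vertices, and an embedding is stress free
when this map is injective. Injectivity is an open condition on a linear family of linear maps, and
it is dense as soon as it holds somewhere, because on the line through a good point only finitely
many parameters (eigenvalues) are bad. Hence one stress-free embedding suffices.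

Such an embedding is found by induction on the number of vertices, following Whiteley's vertex
splitting. Let `uv` be an edge with fewer than `d` common neighbors of `u` and `v`, and take a
generic stress-free embedding of the contraction. Place `v` at the position of `u`, but give the
collapsed edge `uv` a direction `x` that is linearly independent together with the directions from
`u` to the common neighbors. A stress of this degenerate configuration pushes forward to a stress of
the contraction, which vanishes; equilibrium at `u` then kills what is left. By openness, moving `v`
slightly in the direction `x` keeps the configuration stress free, and the length of `uv` only
rescales its weight.

The edge `uv` is provided by Mader's argument. If every edge of a graph lies in at least three
triangles, then the neighborhood of a nonisolated vertex of degree at most `5` contains enough edges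
to exhibit a `K₅` minor; and if there is no such vertex, then some `n` vertices span at least
`3 * n - 5` edges. The latter again forces a `K₅` minor: contracting an edge in at most two
triangles loses at most three edges, so one may assume that every edge lies in three triangles, and
exactly `3 * n - 5` edges leave a vertex of degree at most `5`.
-/

open Function

section Minors

variable {U V W : Type*} {F : SimpleGraph U} {G : SimpleGraph V} {H : SimpleGraph W}

theorem connected_induce_biUnion {B : W → Set V} (hconn : ∀ i, (G.induce (B i)).Connected)
    (hadj : ∀ i j, H.Adj i j → ∃ x ∈ B i, ∃ y ∈ B j, G.Adj x y) {s : Set W}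
    (hs : (H.induce s).Connected) : (G.induce (⋃ i ∈ s, B i)).Connected := by
  have hsub (i : s) : B i ⊆ ⋃ i ∈ s, B i := Set.subset_biUnion_of_mem i.2
  have reachable_of_mem (i : s) {x y : V} (hx : x ∈ B i) (hy : y ∈ B i) :
      (G.induce (⋃ i ∈ s, B i)).Reachable ⟨x, hsub i hx⟩ ⟨y, hsub i hy⟩ :=
    ((hconn i).preconnected ⟨x, hx⟩ ⟨y, hy⟩).map (G.induceHomOfLE (hsub i)).toHom
  have reachable_of_walk {i j : s} (p : (H.induce s).Walk i j) :
      ∀ {x y : V} (hx : x ∈ B i) (hy : y ∈ B j),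
        (G.induce (⋃ i ∈ s, B i)).Reachable ⟨x, hsub i hx⟩ ⟨y, hsub j hy⟩ := by
    induction p with
    | nil => exact reachable_of_mem _
    | @cons i j k hij _ ih =>
      intro x y hx hy
      obtain ⟨a, ha, b, hb, hab⟩ := hadj i j hij
      have hstep : (G.induce (⋃ i ∈ s, B i)).Adj ⟨a, hsub i ha⟩ ⟨b, hsub j hb⟩ := hab
      exact ((reachable_of_mem i hx ha).trans hstep.reachable).trans (ih hb hy)
  obtain ⟨i⟩ := hs.nonempty
  obtain ⟨x, hx⟩ := (hconn i).nonempty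
  refine SimpleGraph.connected_iff _ |>.2 ⟨?_, ⟨x, hsub i hx⟩⟩
  rintro ⟨y, hy⟩ ⟨z, hz⟩
  obtain ⟨j, hj, hyj⟩ := Set.mem_iUnion₂.1 hy
  obtain ⟨k, hk, hzk⟩ := Set.mem_iUnion₂.1 hz
  obtain ⟨p⟩ := hs.preconnected ⟨j, hj⟩ ⟨k, hk⟩
  exact reachable_of_walk p hyj hzk

theorem HasMinor.trans (hFG : HasMinor F G) (hGH : HasMinor G H) : HasMinor F H := by
  obtain ⟨B, hne, hdisj, hconn, hadj⟩ := hFG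
  obtain ⟨C, hne', hdisj', hconn', hadj'⟩ := hGH
  refine ⟨fun k => ⋃ i ∈ C k, B i, fun k => ?_, fun k l hkl => ?_,
    fun k => connected_induce_biUnion hconn hadj (hconn' k), fun k l hkl => ?_⟩
  · obtain ⟨i, hi⟩ := hne' k
    exact (hne i).mono (Set.subset_biUnion_of_mem hi)
  · simp only [Set.disjoint_iUnion_left, Set.disjoint_iUnion_right]
    intro i hi j hj
    exact hdisj _ _ ((hdisj' k l hkl).ne_of_mem hj hi)
  · obtain ⟨i, hi, j, hj, hij⟩ := hadj' k l hkl
    obtain ⟨x, hx, y, hy, hxy⟩ := hadj i j hij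
    exact ⟨x, Set.mem_biUnion hi hx, y, Set.mem_biUnion hj hy, hxy⟩

theorem connected_induce_singleton (G : SimpleGraph V) (v : V) : (G.induce {v}).Connected := by
  rw [SimpleGraph.induce_singleton_eq_top]
  exact SimpleGraph.connected_top

open scoped SimpleGraph in
theorem HasMinor.of_isContained (h : H ⊑ G) : HasMinor G H := by
  obtain ⟨f⟩ := h
  refine ⟨fun i => {f i}, fun i => Set.singleton_nonempty _, fun i j hij => ?_,
    fun i => connected_induce_singleton G _, fun i j hij => ?_⟩
  · exact Set.disjoint_singleton.2 (f.injective.ne hij)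
  · exact ⟨f i, rfl, f j, rfl, f.toHom.map_adj hij⟩

theorem hasMinor_map {π : V → W} (hπ : ∀ i, (G.induce (π ⁻¹' {i})).Connected) :
    HasMinor G (G.map π) := by
  refine ⟨fun i => π ⁻¹' {i}, fun i => Set.nonempty_coe_sort.1 (hπ i).nonempty,
    fun i j hij => ?_, hπ, ?_⟩
  · exact (Set.disjoint_singleton.2 hij).preimage π
  · rintro _ _ ⟨-, x, y, hxy, rfl, rfl⟩
    exact ⟨x, rfl, y, rfl, hxy⟩

theorem hasMinor_top_succ_of_isNClique {n : ℕ} {s : Finset V} (hs : G.IsNClique n s) {t : Set V}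
    (ht : (G.induce t).Connected) (hdisj : Disjoint ↑s t) (hadj : ∀ a ∈ s, ∃ b ∈ t, G.Adj a b) :
    HasMinor G (⊤ : SimpleGraph (Fin (n + 1))) := by
  have hoption : HasMinor G (⊤ : SimpleGraph (Option s)) := by
    refine ⟨fun o => o.elim t fun a => {a.1}, ?_, ?_, ?_, ?_⟩
    · rintro (_ | a)
      exacts [Set.nonempty_coe_sort.1 ht.nonempty, Set.singleton_nonempty _]
    · rintro (_ | a) (_ | b) hab
      · exact absurd rfl hab
      · exact (hdisj.mono_left (Set.singleton_subset_iff.2 b.2)).symm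
      · exact hdisj.mono_left (Set.singleton_subset_iff.2 a.2)
      · exact Set.disjoint_singleton.2 fun h => hab (congrArg some (Subtype.ext h))
    · rintro (_ | a)
      exacts [ht, connected_induce_singleton G _]
    · rintro (_ | a) (_ | b) hab
      · exact absurd hab (SimpleGraph.irrefl _)
      · obtain ⟨c, hc, hbc⟩ := hadj b b.2
        exact ⟨c, hc, b, rfl, hbc.symm⟩
      · obtain ⟨c, hc, hac⟩ := hadj a a.2
        exact ⟨a, rfl, c, hc, hac⟩
      · have hne : (a : V) ≠ b := fun h => hab.ne (congrArg some (Subtype.ext h))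
        exact ⟨a, rfl, b, rfl, hs.isClique a.2 b.2 hne⟩
  refine hoption.trans (.of_isContained (SimpleGraph.isContained_top_iff.2 ?_))
  exact ⟨(Fintype.equivOfCardEq (by simp [hs.card_eq])).toEmbedding⟩

end Minors

section EdgeContraction

variable {V : Type*} {G : SimpleGraph V} {u v : V}

/-- The map that identifies `v` with `u` and fixes every other vertex. If `G.Adj u v`, then
`G.map (mergeInto h)` is the contraction of the edge `uv`, on the vertex set `{v}ᶜ`. -/
noncomputable def mergeInto (h : u ≠ v) (a : V) : ({v}ᶜ : Set V) :=
  if ha : a = v then ⟨u, h⟩ else ⟨a, ha⟩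

theorem coe_mergeInto (h : u ≠ v) (a : V) : (mergeInto h a : V) = if a = v then u else a := by
  unfold mergeInto
  split_ifs <;> rfl

theorem mergeInto_eq_iff (h : u ≠ v) {a b : V} :
    mergeInto h a = mergeInto h b ↔ a = b ∨ (a = u ∧ b = v) ∨ (a = v ∧ b = u) := by
  rw [Subtype.ext_iff, coe_mergeInto, coe_mergeInto]
  grind

theorem mergeInto_injOn (h : u ≠ v) : Set.InjOn (mergeInto h) {v}ᶜ := fun a ha b hb hab =>
  ((mergeInto_eq_iff h).1 hab).elim id (by rintro (⟨-, rfl⟩ | ⟨rfl, -⟩) <;> contradiction)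

theorem mergeInto_surjective (h : u ≠ v) : Surjective (mergeInto h) := fun a =>
  ⟨a, Subtype.ext ((coe_mergeInto h a).trans (if_neg a.2))⟩

theorem mergeInto_preimage_left (h : u ≠ v) : mergeInto h ⁻¹' {mergeInto h u} = {u, v} := by
  ext a
  simp only [Set.mem_preimage, Set.mem_singleton_iff, mergeInto_eq_iff, Set.mem_insert_iff]
  grind

theorem mergeInto_preimage_of_ne (h : u ≠ v) {a : V} (hau : a ≠ u) (hav : a ≠ v) :
    mergeInto h ⁻¹' {mergeInto h a} = {a} := by
  ext b
  simp only [Set.mem_preimage, Set.mem_singleton_iff, mergeInto_eq_iff]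
  grind

theorem hasMinor_map_mergeInto (huv : G.Adj u v) : HasMinor G (G.map (mergeInto huv.ne)) := by
  refine hasMinor_map fun i => ?_
  obtain ⟨a, rfl⟩ := mergeInto_surjective huv.ne i
  by_cases ha : mergeInto huv.ne a = mergeInto huv.ne u
  · rw [ha, mergeInto_preimage_left]
    exact SimpleGraph.induce_pair_connected_of_adj huv
  · rw [mergeInto_eq_iff] at ha
    rw [mergeInto_preimage_of_ne huv.ne (by tauto) (by tauto)]
    exact connected_induce_singleton G a

theorem ncard_edgeSet_eq_card_edgeFinset (G : SimpleGraph V) [Fintype G.edgeSet] :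
    G.edgeSet.ncard = G.edgeFinset.card := by
  rw [← G.coe_edgeFinset, Set.ncard_coe_finset]

theorem ncard_edgeSet_induce_compl_singleton_add_degree [Fintype V] (G : SimpleGraph V) (v : V) :
    (G.induce {v}ᶜ).edgeSet.ncard + G.degree v = G.edgeSet.ncard := by
  rw [ncard_edgeSet_eq_card_edgeFinset, ncard_edgeSet_eq_card_edgeFinset,
    G.card_edgeFinset_induce_compl_singleton, G.card_edgeFinset_deleteIncidenceSet]
  exact Nat.sub_add_cancel (G.degree_le_card_edgeFinset v)

-- The edges `vx` with `x` not a neighbor of `u` become new edges `ux`.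
theorem ncard_edgeSet_induce_add_ncard_le (huv : G.Adj u v) [Finite V] :
    (G.induce {v}ᶜ).edgeSet.ncard + (G.neighborSet v \ insert u (G.neighborSet u)).ncard ≤
      (G.map (mergeInto huv.ne)).edgeSet.ncard := by
  have hinj := mergeInto_injOn huv.ne
  let newEdge (x : V) := s(mergeInto huv.ne u, mergeInto huv.ne x)
  have newEdge_injOn : Set.InjOn newEdge {v}ᶜ := fun x hx y hy hxy =>
    hinj hx hy (Sym2.congr_right.1 hxy)
  have hN : G.neighborSet v \ insert u (G.neighborSet u) ⊆ {v}ᶜ := fun x hx => hx.1.ne'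
  rw [← (newEdge_injOn.mono hN).ncard_image, ← Set.ncard_union_eq]
  · refine Set.ncard_le_ncard (Set.union_subset (fun e he => ?_) ?_)
    · induction e using Sym2.ind with | _ x y => ?_
      have hfix (z : ({v}ᶜ : Set V)) : mergeInto huv.ne z = z :=
        Subtype.ext ((coe_mergeInto huv.ne z).trans (if_neg z.2))
      have hxy : G.Adj x y := he
      rw [SimpleGraph.mem_edgeSet, ← hfix x, ← hfix y]
      exact SimpleGraph.map_adj_apply' hxy (hinj.ne x.2 y.2 hxy.ne)
    · rintro _ ⟨x, ⟨hvx, hux⟩, rfl⟩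
      have hvu : mergeInto huv.ne v = mergeInto huv.ne u := (mergeInto_eq_iff huv.ne).2 (by simp)
      have hux : u ≠ x := fun h => hux (h ▸ Set.mem_insert u _)
      rw [SimpleGraph.mem_edgeSet, ← hvu]
      exact SimpleGraph.map_adj_apply' hvx (hvu ▸ hinj.ne huv.ne hvx.ne' hux)
  · refine Set.disjoint_right.2 ?_
    rintro _ ⟨x, ⟨hvx, hux⟩, rfl⟩ he
    have he : G.Adj (mergeInto huv.ne u) (mergeInto huv.ne x) := he
    rw [coe_mergeInto, coe_mergeInto, if_neg huv.ne, if_neg hvx.ne'] at he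
    exact hux (Set.mem_insert_of_mem u he)

theorem degree_le_ncard_sdiff_add_ncard_commonNeighbors [Fintype V] (G : SimpleGraph V) (u v : V) :
    G.degree v ≤ (G.neighborSet v \ insert u (G.neighborSet u)).ncard + 1 +
      (G.commonNeighbors u v).ncard := by
  have hsub : G.neighborSet v ⊆
      G.neighborSet v \ insert u (G.neighborSet u) ∪ {u} ∪ G.commonNeighbors u v := by
    intro x hx
    by_cases x = u <;> by_cases G.Adj u x <;> simp_all [SimpleGraph.commonNeighbors]
  have hle := (Set.ncard_le_ncard hsub).trans (Set.ncard_union_le _ _)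
  have := Set.ncard_union_le (G.neighborSet v \ insert u (G.neighborSet u)) {u}
  rw [Set.ncard_singleton] at this
  rw [Set.ncard_eq_toFinset_card', Set.toFinset_card, G.card_neighborSet_eq_degree] at hle
  omega

theorem ncard_edgeSet_le_ncard_edgeSet_map_mergeInto [Finite V] (huv : G.Adj u v) :
    G.edgeSet.ncard ≤ (G.map (mergeInto huv.ne)).edgeSet.ncard + 1 +
      (G.commonNeighbors u v).ncard := by
  have := Fintype.ofFinite V
  have := ncard_edgeSet_induce_compl_singleton_add_degree G v
  have := ncard_edgeSet_induce_add_ncard_le huv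
  have := degree_le_ncard_sdiff_add_ncard_commonNeighbors G u v
  omega

end EdgeContraction

section Mader

variable {V : Type*} {G : SimpleGraph V}

theorem isNClique_four {a b c d : V} (hab : G.Adj a b) (hac : G.Adj a c) (had : G.Adj a d)
    (hbc : G.Adj b c) (hbd : G.Adj b d) (hcd : G.Adj c d) : G.IsNClique 4 {a, b, c, d} :=
  (SimpleGraph.is3Clique_triple_iff.2 ⟨hbc, hbd, hcd⟩).insert (by simp [hab, hac, had])

theorem exists_le_ncard_edgeSet_eq {k : ℕ} (hk : k ≤ G.edgeSet.ncard) :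
    ∃ G' ≤ G, G'.edgeSet.ncard = k := by
  obtain ⟨T, hT, rfl⟩ := Set.exists_subset_card_eq hk
  refine ⟨G.deleteEdges (G.edgeSet \ T), G.deleteEdges_le _, ?_⟩
  rw [SimpleGraph.edgeSet_deleteEdges, Set.sdiff_sdiff_cancel_left hT]

theorem exists_degree_pos_le_five [Fintype V] (h : G.edgeSet.ncard < 3 * G.support.ncard) :
    ∃ p, 0 < G.degree p ∧ G.degree p ≤ 5 := by
  by_contra! hdeg
  have hsum : G.support.toFinset.card • 6 ≤ ∑ p ∈ G.support.toFinset, G.degree p :=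
    Finset.card_nsmul_le_sum _ _ _ fun p hp =>
      hdeg p (G.degree_pos_iff_mem_support p |>.2 (Set.mem_toFinset.1 hp))
  have hle := hsum.trans (Finset.sum_le_univ_sum_of_nonneg fun _ => Nat.zero_le _)
  rw [G.sum_degrees_eq_twice_card_edges, ← Set.ncard_eq_toFinset_card',
    ← ncard_edgeSet_eq_card_edgeFinset, smul_eq_mul] at hle
  omega

theorem adj_or_adj_of_degree_le_five [Fintype V] {p a b c : V} (hp : G.degree p ≤ 5)
    (ha : 3 ≤ (G.commonNeighbors p a).ncard) (hpa : G.Adj p a) (hpb : G.Adj p b)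
    (hpc : G.Adj p c) (hab : a ≠ b) (hac : a ≠ c) (hbc : b ≠ c) : G.Adj a b ∨ G.Adj a c := by
  by_contra! hnot
  have hsub : G.commonNeighbors p a ⊆ ↑(G.neighborFinset p \ {a, b, c}) := by
    intro x hx
    obtain ⟨hpx, hax⟩ := G.mem_commonNeighbors.1 hx
    simp only [Finset.coe_sdiff, SimpleGraph.coe_neighborFinset, Set.mem_sdiff, Finset.mem_coe,
      SimpleGraph.mem_neighborSet, Finset.mem_insert, Finset.mem_singleton]
    refine ⟨hpx, ?_⟩
    rintro (rfl | rfl | rfl)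
    exacts [G.irrefl hax, hnot.1 hax, hnot.2 hax]
  have hle := Set.ncard_le_ncard hsub
  have habc : {a, b, c} ⊆ G.neighborFinset p := by
    simp [Finset.insert_subset_iff, hpa, hpb, hpc]
  rw [Set.ncard_coe_finset, Finset.card_sdiff_of_subset habc, G.card_neighborFinset_eq_degree,
    Finset.card_eq_three.2 ⟨a, b, c, hab, hac, hbc, rfl⟩] at hle
  omega

theorem hasMinor_top_five_of_degree_le_five [Fintype V] {p : V} (hpos : 0 < G.degree p)
    (hp : G.degree p ≤ 5) (hcommon : ∀ a, G.Adj p a → 3 ≤ (G.commonNeighbors p a).ncard) :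
    HasMinor G (⊤ : SimpleGraph (Fin 5)) := by
  have adj_or_adj {a b c : V} (ha : G.Adj p a) (hb : G.Adj p b) (hc : G.Adj p c) :=
    adj_or_adj_of_degree_le_five hp (hcommon a ha) ha hb hc
  have exists_common {a : V} (ha : G.Adj p a) := (Set.two_lt_ncard_iff).1 (hcommon a ha)
  simp only [SimpleGraph.mem_commonNeighbors] at exists_common
  by_cases hclique : G.IsClique (G.neighborSet p)
  · obtain ⟨a, hpa⟩ := (G.degree_pos_iff_exists_adj p).1 hpos
    obtain ⟨c, d, e, ⟨hpc, hac⟩, ⟨hpd, had⟩, ⟨hpe, hae⟩, hcd, hce, hde⟩ := exists_common hpa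
    refine hasMinor_top_succ_of_isNClique
      (isNClique_four hpa hpc hpd hac had (hclique hpc hpd hcd)) (connected_induce_singleton G e) ?_
      ?_
    · simp [hpe.ne', hae.ne', hce.symm, hde.symm]
    · simp [hpe, hae, hclique hpc hpe hce, hclique hpd hpe hde]
  · obtain ⟨a, hpa, b, hpb, hne, hab⟩ : ∃ a, G.Adj p a ∧ ∃ b, G.Adj p b ∧ a ≠ b ∧ ¬ G.Adj a b := by
      simpa [SimpleGraph.IsClique, Set.Pairwise] using hclique
    obtain ⟨c, d, e, ⟨hpc, hac⟩, ⟨hpd, had⟩, ⟨hpe, hae⟩, hcd, hce, hde⟩ := exists_common hpa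
    have adj_b {x : V} (hpx : G.Adj p x) (hax : G.Adj a x) : G.Adj b x :=
      (adj_or_adj hpb hpa hpx hne.symm (by rintro rfl; exact hab hax) hax.ne).resolve_left
        fun h => hab h.symm
    have hasMinor_of_adj {x y z : V} (hpx : G.Adj p x) (hax : G.Adj a x) (hpy : G.Adj p y)
        (hay : G.Adj a y) (hpz : G.Adj p z) (haz : G.Adj a z) (hxy : G.Adj x y) (hxz : x ≠ z)
        (hyz : y ≠ z) : HasMinor G (⊤ : SimpleGraph (Fin 5)) := by
      refine hasMinor_top_succ_of_isNClique (isNClique_four hpa hpx hpy hax hay hxy)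
        (SimpleGraph.induce_pair_connected_of_adj (adj_b hpz haz)) ?_ ?_
      · simp [hpb.ne', hpz.ne', hne.symm, haz.ne', (adj_b hpx hax).ne, hxz.symm,
          (adj_b hpy hay).ne, hyz.symm]
      · simp [hpb, haz, (adj_b hpx hax).symm, (adj_b hpy hay).symm]
    rcases adj_or_adj hpc hpd hpe hcd hce hde with hadj | hadj
    · exact hasMinor_of_adj hpc hac hpd had hpe hae hadj hce hde
    · exact hasMinor_of_adj hpc hac hpe hae hpd had hadj hcd hde.symm

theorem hasMinor_top_five_of_le_ncard_edgeSet [Finite V] (hV : 3 ≤ Nat.card V)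
    (hE : 3 * Nat.card V ≤ G.edgeSet.ncard + 5) : HasMinor G (⊤ : SimpleGraph (Fin 5)) := by
  generalize hn : Nat.card V = n at hV hE
  induction n, hV using Nat.le_induction generalizing V with
  | base =>
    have := Fintype.ofFinite V
    have hle := G.card_edgeFinset_le_card_choose_two
    rw [← ncard_edgeSet_eq_card_edgeFinset, ← Nat.card_eq_fintype_card, hn,
      show Nat.choose 3 2 = 3 from rfl] at hle
    omega
  | succ n hn3 ih =>
    have := Fintype.ofFinite V
    have hcard (v : V) : Nat.card ({v}ᶜ : Set V) = n := by
      rw [Nat.card_coe_set_eq, Set.ncard_compl, Set.ncard_singleton, hn, Nat.add_sub_cancel]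
    obtain ⟨G', hG', hE'⟩ := exists_le_ncard_edgeSet_eq (G := G) (k := 3 * (n + 1) - 5) (by omega)
    refine .trans (.of_isContained (.of_le hG')) ?_
    by_cases hisolated : ∃ v, G'.degree v = 0
    · obtain ⟨v, hv⟩ := hisolated
      have := ncard_edgeSet_induce_compl_singleton_add_degree G' v
      exact .trans (.of_isContained ⟨.induce G' {v}ᶜ⟩) (ih (hcard v) (by omega))
    by_cases hcommon : ∀ u v, G'.Adj u v → 3 ≤ (G'.commonNeighbors u v).ncard
    · have hsupport : G'.support = Set.univ :=
        Set.eq_univ_of_forall fun v =>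
          (G'.degree_pos_iff_mem_support v).1 (Nat.pos_of_ne_zero fun hv => hisolated ⟨v, hv⟩)
      obtain ⟨p, hpos, hp⟩ :=
        exists_degree_pos_le_five (G := G') (by rw [hsupport, Set.ncard_univ, hn]; omega)
      exact hasMinor_top_five_of_degree_le_five hpos hp (hcommon p)
    · push Not at hcommon
      obtain ⟨u, v, huv, hlt⟩ := hcommon
      have := ncard_edgeSet_le_ncard_edgeSet_map_mergeInto huv
      exact (hasMinor_map_mergeInto huv).trans (ih (hcard v) (by omega))

theorem exists_adj_ncard_commonNeighbors_lt_three [Finite V]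
    (hfree : ¬ HasMinor G (⊤ : SimpleGraph (Fin 5))) (hG : G ≠ ⊥) :
    ∃ u v, G.Adj u v ∧ (G.commonNeighbors u v).ncard < 3 := by
  have := Fintype.ofFinite V
  by_contra! hcommon
  apply hfree
  by_cases hE : G.edgeSet.ncard < 3 * G.support.ncard
  · obtain ⟨p, hpos, hp⟩ := exists_degree_pos_le_five hE
    exact hasMinor_top_five_of_degree_le_five hpos hp (hcommon p)
  · obtain ⟨a, b, hab⟩ := SimpleGraph.ne_bot_iff_exists_adj.1 hG
    have hsub : G.commonNeighbors a b ⊆ G.support := fun c hc =>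
      G.mem_support.2 ⟨a, hc.1.symm⟩
    have hsupport : 3 ≤ G.support.ncard := (hcommon a b hab).trans (Set.ncard_le_ncard hsub)
    have hinduce := G.card_edgeFinset_induce_support
    rw [← ncard_edgeSet_eq_card_edgeFinset, ← ncard_edgeSet_eq_card_edgeFinset] at hinduce
    exact .trans (.of_isContained ⟨.induce G G.support⟩)
      (hasMinor_top_five_of_le_ncard_edgeSet hsupport (by rw [Nat.card_coe_set_eq]; omega))

end Mader

section GenericInjectivity

variable {F M N : Type*}

theorem finite_setOf_not_injective_add_smul {K : Type*} [Field K] [AddCommGroup M] [Module K M]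
    [FiniteDimensional K M] [AddCommGroup N] [Module K N] {P : M →ₗ[K] N} (hP : Injective P)
    (Q : M →ₗ[K] N) : {t : K | ¬ Injective (P + t • Q)}.Finite := by
  obtain ⟨L, hL⟩ := P.exists_leftInverse_of_injective (LinearMap.ker_eq_bot.2 hP)
  have hneg_inv : Injective fun t : K => -t⁻¹ := neg_injective.comp inv_injective
  refine ((Module.End.finite_hasEigenvalue (L ∘ₗ Q)).preimage hneg_inv.injOn).subset fun t ht => ?_
  obtain ⟨w, hw, hw0⟩ : ∃ w, P w + t • Q w = 0 ∧ w ≠ 0 := by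
    simpa [injective_iff_map_eq_zero] using ht
  have ht0 : t ≠ 0 := by
    rintro rfl
    exact hw0 (hP (by simpa using hw))
  have hLw : w + t • L (Q w) = 0 := by
    simpa [show L (P w) = w from LinearMap.congr_fun hL w] using congrArg L hw
  refine Module.End.hasEigenvalue_of_hasEigenvector (x := w)
    ⟨Module.End.mem_eigenspace_iff.2 ?_, hw0⟩
  rw [neg_smul, LinearMap.comp_apply, eq_neg_iff_add_eq_zero, ← smul_right_inj ht0, smul_add,
    smul_inv_smul₀ ht0, smul_zero, add_comm, hLw]

variable [AddCommGroup F] [Module ℝ F]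

theorem dense_setOf_injective [TopologicalSpace F] [ContinuousAdd F] [ContinuousSMul ℝ F]
    [AddCommGroup M] [Module ℝ M] [FiniteDimensional ℝ M] [AddCommGroup N] [Module ℝ N]
    (A : F →ₗ[ℝ] M →ₗ[ℝ] N) {f₀ : F} (h₀ : Injective (A f₀)) : Dense {f | Injective (A f)} := by
  intro f
  have hfinite := finite_setOf_not_injective_add_smul h₀ (A (f - f₀))
  have hline : Continuous fun t : ℝ => f₀ + t • (f - f₀) := by fun_prop
  have hmem := map_mem_closure hline (hfinite.countable.dense_compl ℝ 1)
    (t := {f | Injective (A f)}) fun t ht => by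
      simpa only [Set.mem_compl_iff, Set.mem_ofPred_eq, not_not, map_add, map_smul] using ht
  simpa using hmem

theorem isOpen_setOf_injective [TopologicalSpace F] [IsTopologicalAddGroup F]
    [ContinuousSMul ℝ F] [T2Space F] [FiniteDimensional ℝ F] [NormedAddCommGroup M]
    [NormedSpace ℝ M] [FiniteDimensional ℝ M] [NormedAddCommGroup N] [NormedSpace ℝ N]
    (A : F →ₗ[ℝ] M →ₗ[ℝ] N) : IsOpen {f | Injective (A f)} := by
  let A' : F →ₗ[ℝ] M →L[ℝ] N := (LinearMap.toContinuousLinearMap (𝕜 := ℝ)).toLinearMap ∘ₗ A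
  exact (ContinuousLinearMap.isOpen_injective (𝕜 := ℝ) (E := M) (F := N)).preimage
    A'.continuous_of_finiteDimensional

end GenericInjectivity

section Stress

variable {V W E : Type*} [AddCommGroup E] [Module ℝ E] {G : SimpleGraph V}

/-- The weights on the edges of `G`, encoded as symmetric functions of two vertices that vanish
on nonadjacent pairs. -/
def edgeWeights (G : SimpleGraph V) : Submodule ℝ (V → V → ℝ) where
  carrier := {w | (∀ a b, w a b = w b a) ∧ ∀ a b, ¬ G.Adj a b → w a b = 0}
  add_mem' hw hw' :=
    ⟨fun a b => congrArg₂ (· + ·) (hw.1 a b) (hw'.1 a b),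
      fun a b h => by simp [hw.2 a b h, hw'.2 a b h]⟩
  zero_mem' := ⟨fun _ _ => rfl, fun _ _ _ => rfl⟩
  smul_mem' c w hw :=
    ⟨fun a b => congrArg (c * ·) (hw.1 a b), fun a b h => by simp [hw.2 a b h]⟩

theorem edgeWeights_apply_self (w : edgeWeights G) (a : V) : w.1 a a = 0 :=
  w.2.2 a a G.irrefl

/-- The direction field `δ a b = f a - f b` of a map `f`. -/
def differences : (V → E) →ₗ[ℝ] V → V → E where
  toFun f a b := f a - f b
  map_add' _ _ := funext₂ fun _ _ => add_sub_add_comm _ _ _ _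
  map_smul' c f := funext₂ fun a b => (smul_sub c (f a) (f b)).symm

theorem differences_apply (f : V → E) (a b : V) : differences f a b = f a - f b := rfl

theorem sum_sum_smul_eq_zero_of_antisymm {s : Finset V} {w : V → V → ℝ} {δ : V → V → E}
    (hw : ∀ a b, w a b = w b a) (hδ : ∀ a b, δ a b = -δ b a) :
    ∑ a ∈ s, ∑ b ∈ s, w a b • δ a b = 0 := by
  have hneg : ∑ a ∈ s, ∑ b ∈ s, w a b • δ a b = -∑ a ∈ s, ∑ b ∈ s, w a b • δ a b := by
    simp only [← Finset.sum_neg_distrib]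
    rw [Finset.sum_comm]
    refine Finset.sum_congr rfl fun a _ => Finset.sum_congr rfl fun b _ => ?_
    rw [hw b a, hδ b a, smul_neg]
  linear_combination (norm := module) (1 / 2 : ℝ) • hneg

variable [Fintype V]

/-- The equilibrium map of a direction field `δ` sends weights on the edges of `G` to the resulting
forces at the vertices. The stresses of `f` are its kernel for `δ a b = f a - f b`; direction
fields that are not of this form arise as limits when two vertices collide. -/
def equilibriumMap (G : SimpleGraph V) :
    (V → V → E) →ₗ[ℝ] edgeWeights G →ₗ[ℝ] V → E :=
  LinearMap.mk₂ ℝ (fun δ w a => ∑ b, w.1 a b • δ a b)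
    (fun _ _ _ => by ext1 a; simp [Finset.sum_add_distrib])
    (fun c _ _ => by ext1 a; simp [Finset.smul_sum, smul_comm c])
    (fun _ _ _ => by ext1 a; simp [Finset.sum_add_distrib, add_smul])
    (fun _ _ _ => by ext1 a; simp [Finset.smul_sum, smul_smul])

theorem equilibriumMap_apply (δ : V → V → E) (w : edgeWeights G) (a : V) :
    equilibriumMap G δ w a = ∑ b, w.1 a b • δ a b := rfl

theorem mem_stressFreeEmbeddings_iff {d : ℕ} {f : V → EuclideanSpace ℝ (Fin d)} :
    f ∈ StressFreeEmbeddings G d ↔ Injective (equilibriumMap G (differences f)) := by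
  rw [injective_iff_map_eq_zero]
  constructor
  · intro hf w hw
    let weight (e : G.edgeSet) : ℝ := Sym2.lift ⟨w.1, w.2.1⟩ e.1
    have hweight : weight = 0 := hf weight fun a => by
      refine Eq.trans (Finset.sum_congr rfl fun b _ => ?_) (congrFun hw a)
      split_ifs with hab
      · rfl
      · rw [w.2.2 a b hab, zero_smul]
    ext a b
    by_cases hab : G.Adj a b
    · exact congrFun hweight ⟨s(a, b), hab⟩
    · exact w.2.2 a b hab
  · intro hf w hw
    let weight (a b : V) : ℝ := if hab : G.Adj a b then w ⟨s(a, b), hab⟩ else 0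
    have weight_mem : weight ∈ edgeWeights G :=
      ⟨fun a b => by simp only [weight, G.adj_comm a b, Sym2.eq_swap (a := a)],
        fun a b hab => dif_neg hab⟩
    have hweight : (⟨weight, weight_mem⟩ : edgeWeights G) = 0 := hf _ <| by
      ext1 a
      refine Eq.trans (Finset.sum_congr rfl fun b _ => ?_) (hw a)
      simp only [weight, differences_apply]
      split_ifs <;> simp
    ext ⟨e, he⟩
    induction e using Sym2.ind with | _ a b => ?_
    have hab : G.Adj a b := he
    simpa [weight, hab] using congrFun (congrFun (congrArg Subtype.val hweight) a) b

theorem GenericallyStressFree.of_mem {d : ℕ} {f : V → EuclideanSpace ℝ (Fin d)}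
    (hf : f ∈ StressFreeEmbeddings G d) : GenericallyStressFree G d := by
  have hset : StressFreeEmbeddings G d = {f | Injective ((equilibriumMap G ∘ₗ differences) f)} :=
    Set.ext fun _ => mem_stressFreeEmbeddings_iff
  rw [GenericallyStressFree, hset]
  exact ⟨isOpen_setOf_injective _, dense_setOf_injective _ (mem_stressFreeEmbeddings_iff.1 hf)⟩

theorem injective_equilibriumMap_of_eq_smul {c : V → V → ℝ} (hsymm : ∀ a b, c a b = c b a)
    (hc : ∀ a b, c a b ≠ 0) {δ δ' : V → V → E} (hδ : ∀ a b, δ' a b = c a b • δ a b)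
    (h : Injective (equilibriumMap G δ)) : Injective (equilibriumMap G δ') := by
  rw [injective_iff_map_eq_zero] at h ⊢
  intro w hw
  let scaled : edgeWeights G := ⟨fun a b => w.1 a b * c a b,
    fun a b => congrArg₂ (· * ·) (w.2.1 a b) (hsymm a b),
    fun a b hab => by simp [w.2.2 a b hab]⟩
  have hscaled : scaled = 0 := h scaled <| by
    rw [← hw]
    ext1 a
    simp only [equilibriumMap_apply, scaled, hδ, smul_smul]
  ext a b
  exact (mul_eq_zero.1 (congrFun (congrFun (congrArg Subtype.val hscaled) a) b)).resolve_right
    (hc a b)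

/-- The weights induced on `G.map π`: the weight of `ij` is the total weight of the edges between
the fibers of `i` and `j`, and edges inside a fiber are dropped. -/
noncomputable def pushforwardWeights (π : V → W) (w : edgeWeights G) : edgeWeights (G.map π) :=
  ⟨fun i j => if i = j then 0 else ∑ a with π a = i, ∑ b with π b = j, w.1 a b, by
    refine ⟨fun i j => ?_, fun i j hij => ?_⟩
    · simp only [eq_comm (a := i)]
      rw [Finset.sum_comm]
      simp only [w.2.1 _ _]
    · refine ite_eq_left_iff.2 fun hne => ?_
      refine Finset.sum_eq_zero fun a ha => Finset.sum_eq_zero fun b hb => w.2.2 a b fun hab => ?_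
      obtain ⟨rfl⟩ := (Finset.mem_filter.1 ha).2
      obtain ⟨rfl⟩ := (Finset.mem_filter.1 hb).2
      exact hij (SimpleGraph.map_adj_apply' hab hne)⟩

theorem pushforwardWeights_apply (π : V → W) (w : edgeWeights G) {i j : W} (hij : i ≠ j) :
    (pushforwardWeights π w).1 i j = ∑ a with π a = i, ∑ b with π b = j, w.1 a b :=
  if_neg hij

-- Forces inside a fiber cancel by antisymmetry.
theorem equilibriumMap_pushforwardWeights [Fintype W] {π : V → W} {f : W → E} {δ : V → V → E}
    (hanti : ∀ a b, δ a b = -δ b a) (hδ : ∀ a b, π a ≠ π b → δ a b = f (π a) - f (π b))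
    (w : edgeWeights G) (i : W) :
    equilibriumMap (G.map π) (differences f) (pushforwardWeights π w) i =
      ∑ a with π a = i, equilibriumMap G δ w a := by
  have hfiber (j : W) : (pushforwardWeights π w).1 i j • (f i - f j) =
      ∑ a with π a = i, ∑ b with π b = j, w.1 a b • δ a b := by
    by_cases hij : i = j
    · subst hij
      rw [sub_self, smul_zero, sum_sum_smul_eq_zero_of_antisymm w.2.1 hanti]
    · rw [pushforwardWeights_apply π w hij, Finset.sum_smul]
      refine Finset.sum_congr rfl fun a ha => ?_
      rw [Finset.sum_smul]
      refine Finset.sum_congr rfl fun b hb => ?_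
      obtain ⟨rfl⟩ := (Finset.mem_filter.1 ha).2
      obtain ⟨rfl⟩ := (Finset.mem_filter.1 hb).2
      rw [hδ a b hij]
  simp only [equilibriumMap_apply, differences_apply, hfiber]
  rw [Finset.sum_comm]
  exact Finset.sum_congr rfl fun a _ => Finset.sum_fiberwise _ π _

end Stress

section VertexSplitting

variable {V E : Type*} {G : SimpleGraph V} {u v : V} [AddCommGroup E]

/-- The limit of the normalized direction fields of the maps that agree with `g` away from `v` and
send `v` to `g u + t • x`, as `t → 0`: the edge `uv` retains the direction `x`. -/
noncomputable def splitDirections (u v : V) (x : E) (g : V → E) (a b : V) : E :=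
  if a = u ∧ b = v then -x else if a = v ∧ b = u then x else g a - g b

theorem splitDirections_antisymm (h : u ≠ v) (x : E) (g : V → E) (a b : V) :
    splitDirections u v x g a b = -splitDirections u v x g b a := by
  unfold splitDirections
  grind

theorem continuous_splitDirections [TopologicalSpace E] [ContinuousSub E] (u v : V) (x : E) :
    Continuous (splitDirections u v x) := by
  refine continuous_pi fun a => continuous_pi fun b => ?_
  unfold splitDirections
  split_ifs <;> fun_prop

variable [Module ℝ E]

theorem differences_update_add_smul (h : u ≠ v) (g : V → E) (x : E) (t : ℝ) (a b : V) :
    differences (update g v (g u + t • x)) a b =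
      (if s(a, b) = s(u, v) then t else 1) •
        splitDirections u v x (update g v (g u + t • x)) a b := by
  simp only [differences_apply, splitDirections, Sym2.eq_iff]
  by_cases hab : a = u ∧ b = v
  · simp [hab, h]
  by_cases hba : a = v ∧ b = u
  · simp [hba, h, h.symm]
  simp [hab, hba]

variable [Fintype V]

theorem filter_mergeInto_eq_left (h : u ≠ v)
    {_ : DecidablePred fun a => mergeInto h a = mergeInto h u} :
    ({a | mergeInto h a = mergeInto h u} : Finset V) = {u, v} := by
  ext a
  simpa using Set.ext_iff.1 (mergeInto_preimage_left h) a

theorem filter_mergeInto_eq_of_ne (h : u ≠ v) {b : V} (hbu : b ≠ u) (hbv : b ≠ v)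
    {_ : DecidablePred fun a => mergeInto h a = mergeInto h b} :
    ({a | mergeInto h a = mergeInto h b} : Finset V) = {b} := by
  ext a
  simpa using Set.ext_iff.1 (mergeInto_preimage_of_ne h hbu hbv) a

theorem pushforwardWeights_mergeInto_left (h : u ≠ v) (w : edgeWeights G) {b : V} (hbu : b ≠ u)
    (hbv : b ≠ v) :
    (pushforwardWeights (mergeInto h) w).1 (mergeInto h u) (mergeInto h b) =
      w.1 u b + w.1 v b := by
  have hπ : mergeInto h u ≠ mergeInto h b := by
    rw [Ne, mergeInto_eq_iff]
    grind
  rw [pushforwardWeights_apply _ _ hπ, filter_mergeInto_eq_left,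
    filter_mergeInto_eq_of_ne h hbu hbv, Finset.sum_pair h, Finset.sum_singleton,
    Finset.sum_singleton]

theorem pushforwardWeights_mergeInto_of_ne (h : u ≠ v) (w : edgeWeights G) {a b : V} (hau : a ≠ u)
    (hav : a ≠ v) (hbu : b ≠ u) (hbv : b ≠ v) :
    (pushforwardWeights (mergeInto h) w).1 (mergeInto h a) (mergeInto h b) = w.1 a b := by
  by_cases hab : a = b
  · rw [hab, edgeWeights_apply_self, edgeWeights_apply_self]
  have hπ : mergeInto h a ≠ mergeInto h b := by
    rw [Ne, mergeInto_eq_iff]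
    grind
  rw [pushforwardWeights_apply _ _ hπ, filter_mergeInto_eq_of_ne h hau hav,
    filter_mergeInto_eq_of_ne h hbu hbv, Finset.sum_singleton, Finset.sum_singleton]

theorem pushforwardWeights_mergeInto_eq_zero (h : u ≠ v) {f : ({v}ᶜ : Set V) → E}
    (hf : Injective (equilibriumMap (G.map (mergeInto h)) (differences f))) {x : E}
    {w : edgeWeights G} (hw : equilibriumMap G (splitDirections u v x (f ∘ mergeInto h)) w = 0) :
    pushforwardWeights (mergeInto h) w = 0 := by
  refine (injective_iff_map_eq_zero _).1 hf _ (funext fun i => ?_)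
  rw [equilibriumMap_pushforwardWeights (splitDirections_antisymm h x (f ∘ mergeInto h))]
  · exact Finset.sum_eq_zero fun a _ => congrFun hw a
  · intro a b hab
    rw [Ne, mergeInto_eq_iff, not_or, not_or] at hab
    rw [splitDirections, if_neg hab.2.1, if_neg hab.2.2, comp_apply, comp_apply]

-- `w u b + w v b = 0` kills `w u b` unless `b` is `v` or a common neighbor of `u` and `v`.
theorem eq_zero_of_equilibriumMap_splitDirections_apply_left (h : u ≠ v) {w : edgeWeights G}
    (hadd : ∀ b, b ≠ u → b ≠ v → w.1 u b + w.1 v b = 0) {x : E} {g : V → E}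
    (hw : equilibriumMap G (splitDirections u v x g) w u = 0)
    (hx : LinearIndependent ℝ fun o : Option (G.commonNeighbors u v) =>
      o.elim x fun c => g u - g c) (b : V) : w.1 u b = 0 := by
  have hsupport {b : V} (hbv : b ≠ v) (hb : b ∉ G.commonNeighbors u v) : w.1 u b = 0 := by
    by_cases hub : G.Adj u b
    · have hvb : w.1 v b = 0 := w.2.2 v b fun hvb => hb ⟨hub, hvb⟩
      simpa [hvb] using hadd b hub.ne' hbv
    · exact w.2.2 u b hub
  have hsum : ∑ o : Option (G.commonNeighbors u v), (o.elim (-w.1 u v) fun c => w.1 u c) •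
      o.elim x (fun c => g u - g c) = 0 := by
    have hforce : ∑ b, w.1 u b • splitDirections u v x g u b = 0 := hw
    have hsub : (G.commonNeighbors u v).toFinset ⊆ Finset.univ.erase v := by
      simpa [Finset.subset_erase] using G.notMem_commonNeighbors_right u v
    rw [← Finset.add_sum_erase _ _ (Finset.mem_univ v), ← Finset.sum_subset hsub fun b hb hb' => by
      rw [hsupport (Finset.ne_of_mem_erase hb) (by simpa using hb'), zero_smul]] at hforce
    rw [← hforce, Fintype.sum_option, Finset.sum_subtype _ (fun _ => Set.mem_toFinset)]
    refine congrArg₂ (· + ·) (by simp [splitDirections]) (Finset.sum_congr rfl fun c _ => ?_)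
    have hcv : (c : V) ≠ v := c.2.2.ne'
    simp [splitDirections, hcv, h]
  have hcoeff := Fintype.linearIndependent_iff.1 hx _ hsum
  by_cases hbv : b = v
  · exact hbv ▸ neg_eq_zero.1 (hcoeff none)
  · by_cases hb : b ∈ G.commonNeighbors u v
    · exact hcoeff (some ⟨b, hb⟩)
    · exact hsupport hbv hb

theorem injective_equilibriumMap_splitDirections (h : u ≠ v) {f : ({v}ᶜ : Set V) → E}
    (hf : Injective (equilibriumMap (G.map (mergeInto h)) (differences f))) {x : E}
    (hx : LinearIndependent ℝ fun o : Option (G.commonNeighbors u v) =>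
      o.elim x fun c => f (mergeInto h u) - f (mergeInto h c)) :
    Injective (equilibriumMap G (splitDirections u v x (f ∘ mergeInto h))) := by
  refine (injective_iff_map_eq_zero _).2 fun w hw => ?_
  have hpush := pushforwardWeights_mergeInto_eq_zero h hf hw
  have hadd (b : V) (hbu : b ≠ u) (hbv : b ≠ v) : w.1 u b + w.1 v b = 0 := by
    rw [← pushforwardWeights_mergeInto_left h w hbu hbv, hpush]
    rfl
  have hu := eq_zero_of_equilibriumMap_splitDirections_apply_left h hadd (congrFun hw u) hx
  have hv (b : V) : w.1 v b = 0 := by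
    by_cases hbu : b = u
    · rw [hbu, w.2.1, hu]
    by_cases hbv : b = v
    · rw [hbv, edgeWeights_apply_self]
    simpa [hu b] using hadd b hbu hbv
  ext a b
  change w.1 a b = 0
  by_cases ha : a = u ∨ a = v
  · rcases ha with rfl | rfl
    exacts [hu b, hv b]
  by_cases hb : b = u ∨ b = v
  · rw [w.2.1]
    rcases hb with rfl | rfl
    exacts [hu a, hv a]
  rw [← pushforwardWeights_mergeInto_of_ne h w (by tauto) (by tauto) (by tauto) (by tauto), hpush]
  rfl

end VertexSplitting

section GenericSplitting

variable {V E : Type*} {G : SimpleGraph V} {u v : V} [NormedAddCommGroup E] [NormedSpace ℝ E]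

theorem exists_injective_equilibriumMap_differences [Fintype V] [FiniteDimensional ℝ E]
    (h : u ≠ v) {g : V → E} (hg : g u = g v) {x : E}
    (hinj : Injective (equilibriumMap G (splitDirections u v x g))) :
    ∃ f : V → E, Injective (equilibriumMap G (differences f)) := by
  let f (t : ℝ) : V → E := update g v (g u + t • x)
  have hf0 : f 0 = g := by simp [f, hg]
  have hcont : Continuous fun t => splitDirections u v x (f t) :=
    (continuous_splitDirections u v x).comp (by fun_prop)
  have hnear : ∀ᶠ t in nhds 0, Injective (equilibriumMap G (splitDirections u v x (f t))) :=
    hcont.continuousAt.eventually <| (isOpen_setOf_injective (equilibriumMap G)).mem_nhds <| by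
      simpa only [Set.mem_ofPred_eq, hf0] using hinj
  obtain ⟨t, ht, ht0⟩ : ∃ t, Injective (equilibriumMap G (splitDirections u v x (f t))) ∧ t ≠ 0 :=
    ((hnear.filter_mono nhdsWithin_le_nhds).and (self_mem_nhdsWithin (s := {0}ᶜ))).exists
  refine ⟨f t, injective_equilibriumMap_of_eq_smul (fun a b => ?_) (fun a b => ?_)
    (differences_update_add_smul h g x t) ht⟩
  · rw [Sym2.eq_swap]
  · split_ifs
    exacts [ht0, one_ne_zero]

theorem exists_mem_linearIndependent_of_dense {W ι : Type*} [Fintype ι] {D : Set (W → E)}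
    (hD : Dense D) {i : W} {p : ι → W} (hp : Injective p) (hi : i ∉ Set.range p)
    (hcard : Fintype.card ι < Module.finrank ℝ E) :
    ∃ f ∈ D, ∃ x, LinearIndependent ℝ fun o : Option ι => o.elim x fun c => f i - f (p c) := by
  let family (q : (W → E) × E) (o : Option ι) : E := o.elim q.2 fun c => q.1 i - q.1 (p c)
  have hcont : Continuous family := by
    refine continuous_pi ?_
    rintro (_ | c) <;> simp only [family, Option.elim] <;> fun_prop
  have hopen : IsOpen {q | LinearIndependent ℝ (family q)} :=
    isOpen_setOfPred_linearIndependent.preimage hcont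
  obtain ⟨basis, hbasis⟩ := exists_linearIndependent_of_le_finrank (R := ℝ) (M := E)
    (n := Fintype.card (Option ι)) (by simpa using hcard)
  let b := basis ∘ Fintype.equivFin (Option ι)
  have hb : LinearIndependent ℝ b := hbasis.comp _ (Equiv.injective _)
  have hne : {q | LinearIndependent ℝ (family q)}.Nonempty := by
    refine ⟨(extend p (fun c => -b (some c)) 0, b none), ?_⟩
    have hfamily : family (extend p (fun c => -b (some c)) 0, b none) = b := by
      ext1 (_ | c)
      · rfl
      · simp [family, hp.extend_apply, extend_apply' _ _ _ hi]
    rwa [Set.mem_ofPred_eq, hfamily]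
  obtain ⟨⟨f, x⟩, hfx, hf, -⟩ := (hD.prod dense_univ).inter_open_nonempty _ hopen hne
  exact ⟨f, hf, x, hfx⟩

end GenericSplitting

theorem GenericallyStressFree.of_map_mergeInto {V : Type*} [Fintype V] {G : SimpleGraph V}
    {u v : V} (huv : G.Adj u v) {d : ℕ} (hcommon : (G.commonNeighbors u v).ncard < d)
    (h : GenericallyStressFree (G.map (mergeInto huv.ne)) d) : GenericallyStressFree G d := by
  have hinj : Injective fun c : G.commonNeighbors u v => mergeInto huv.ne c := fun a b hab =>
    Subtype.ext (mergeInto_injOn huv.ne a.2.2.ne' b.2.2.ne' hab)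
  have hu : mergeInto huv.ne u ∉ Set.range fun c : G.commonNeighbors u v => mergeInto huv.ne c := by
    rintro ⟨c, hc⟩
    exact c.2.1.ne' (mergeInto_injOn huv.ne c.2.2.ne' huv.ne hc)
  obtain ⟨f, hf, x, hx⟩ := exists_mem_linearIndependent_of_dense h.2 hinj hu (by
    rwa [finrank_euclideanSpace_fin, ← Nat.card_eq_fintype_card])
  have hcollapsed := injective_equilibriumMap_splitDirections huv.ne
    (mem_stressFreeEmbeddings_iff.1 hf) hx
  obtain ⟨f', hf'⟩ := exists_injective_equilibriumMap_differences huv.ne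
    (congrArg f ((mergeInto_eq_iff huv.ne).2 (by simp))) hcollapsed
  exact .of_mem (mem_stressFreeEmbeddings_iff.2 hf')

theorem genericallyStressFree_bot (V : Type*) [Fintype V] (d : ℕ) :
    GenericallyStressFree (⊥ : SimpleGraph V) d := by
  refine .of_mem (f := 0) fun w _ => ?_
  ext ⟨e, he⟩
  simp at he

universe u in
theorem genericallyStressFree_of_forall_hasMinor {V : Type u} [Fintype V] {G : SimpleGraph V}
    {d : ℕ} (hG : ∀ {W : Type u} [Finite W] (H : SimpleGraph W), HasMinor G H → H ≠ ⊥ →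
      ∃ x y, H.Adj x y ∧ (H.commonNeighbors x y).ncard < d) : GenericallyStressFree G d := by
  induction hn : Fintype.card V using Nat.strong_induction_on generalizing V with
  | _ n ih =>
    subst hn
    by_cases hbot : G = ⊥
    · exact hbot ▸ genericallyStressFree_bot V d
    obtain ⟨x, y, hxy, hcommon⟩ := hG G (.of_isContained .rfl) hbot
    refine .of_map_mergeInto hxy hcommon (ih _ ?_ (fun H hH => ?_) rfl)
    · exact Fintype.card_subtype_lt (x := y) (by simp)
    · exact hG H ((hasMinor_map_mergeInto hxy).trans hH)

/-- Every finite simple graph with no `K₅` minor (in particular, every planar graph)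
is generically `3`-stress free. -/
theorem k5MinorFree_genericallyThreeStressFree {V : Type*} [Fintype V] (G : SimpleGraph V)
    (hfree : ¬ HasMinor G (⊤ : SimpleGraph (Fin 5))) :
    GenericallyStressFree G 3 := by
  refine genericallyStressFree_of_forall_hasMinor fun H hH => ?_
  exact exists_adj_ncard_commonNeighbors_lt_three fun hK => hfree (hH.trans hK)
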